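/- Let q ∈ ℂ with 0 < |q| < 1, let r be a positive integer, and let a : {1,…,r+1} → ℂ and b : {1,…,r} → ℂ with all a_i, b_i nonzero, a_i ∉ {q^m : m ≥ 1} and b_i ∉ {q^m : m ≥ 1} for each i (so (q/a_i;q)_n ≠ 0 and (q/b_i;q)_n ≠ 0 for all n), and b_i ∉ {q^m : m ∈ ℤ} for each i (so (b_i q^{-n};q)_m ≠ 0 for all n, m). Let x, y ∈ ℂ with y ≠ 0 and x ≠ q^{-m} for every m ∈ ℕ. Assume the families (n,m) ↦ q^{n^2} [∏_{i=1}^{r}(q/b_i;q)_n / ∏_{i=1}^{r+1}(q/a_i;q)_n] (x b₁⋯b_r / (y a₁⋯a_{r+1}))^n · [∏_{i=1}^{r+1}(a_i q^{-n};q)_m / ((q;q)_m ∏_{i=1}^{r}(b_i q^{-n};q)_m)] y^m / (q;q)_n and (n,m) ↦ q^{n^2} [∏_{i=1}^{r}(q/b_i;q)_n / ∏_{i=1}^{r+1}(q/a_i;q)_n] (x b₁⋯b_r / (y a₁⋯a_{r+1}))^n · [∏_{i=1}^{r+1}(a_i q^{-n};q)_m / ((q;q)_m ∏_{i=1}^{r}(b_i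 q^{-n};q)_m)] (y q^n)^m / ((q;q)_n (x;q)_n), both indexed by ℕ×ℕ, are absolutely summable. Then ∑_{n≥0} [q^{n^2}/(q;q)_n] [∏_{i=1}^{r}(q/b_i;q)_n / ∏_{i=1}^{r+1}(q/a_i;q)_n] (x b₁⋯b_r/(y a₁⋯a_{r+1}))^n · ∑_{m≥0} [∏_{i=1}^{r+1}(a_i q^{-n};q)_m / ((q;q)_m ∏_{i=1}^{r}(b_i q^{-n};q)_m)] y^m = (x;q)_∞ · ∑_{n≥0} [q^{n^2}/((q;q)_n (x;q)_n)] [∏_{i=1}^{r}(q/b_i;q)_n / ∏_{i=1}^{r+1}(q/a_i;q)_n] (x b₁⋯b_r/(y a₁⋯a_{r+1}))^n · ∑_{m≥0} [∏_{i=1}^{r+1}(a_i q^{-n};q)_m / ((q;q)_m ∏_{i=1}^{r}(b_i q^{-n};q)_m)] (y q^n)^m. -/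

import Mathlib

/-- The finite q-shifted factorial `(a;q)_n = ∏_{k=0}^{n-1} (1 - a q^k)`. -/
noncomputable def qPoch (a q : ℂ) (n : ℕ) : ℂ := ∏ k ∈ Finset.range n, (1 - a * q ^ k)

/-- The infinite q-shifted factorial `(a;q)_∞ = ∏_{k=0}^{∞} (1 - a q^k)`. -/
noncomputable def qPochInf (a q : ℂ) : ℂ := ∏' k : ℕ, (1 - a * q ^ k)

lemma aux_qne {q : ℂ} (hq1 : ‖q‖ < 1) (n : ℕ) : 1 - q ^ (n + 1) ≠ 0 := by
  intro h
  have h' : q ^ (n + 1) = 1 := (sub_eq_zero.mp h).symm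
  have h2 : ‖q‖ ^ (n + 1) = 1 := by rw [← norm_pow, h', norm_one]
  have := pow_lt_one₀ (norm_nonneg q) hq1 (Nat.succ_ne_zero n)
  rw [Nat.succ_eq_add_one] at this
  linarith

lemma aux_succ (a q : ℂ) (n : ℕ) : qPoch a q (n + 1) = qPoch a q n * (1 - a * q ^ n) := by
  simp [qPoch, Finset.prod_range_succ]

lemma aux_succ' (a q : ℂ) (n : ℕ) : qPoch a q (n + 1) = (1 - a) * qPoch (a * q) q n := by
  simp only [qPoch, Finset.prod_range_succ']
  rw [mul_comm]
  congr 1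
  · simp
  · apply Finset.prod_congr rfl
    intro k _
    ring

lemma aux_inv {q : ℂ} (hq1 : ‖q‖ < 1) (n : ℕ) :
    (qPoch q q n)⁻¹ = (1 - q ^ (n + 1)) * (qPoch q q (n + 1))⁻¹ := by
  have h := aux_qne hq1 n
  rw [aux_succ, mul_inv, ← pow_succ']
  field_simp

lemma aux_zero (a q : ℂ) : qPoch a q 0 = 1 := by simp [qPoch]

/-- limit q-Vandermonde -/
lemma aux_fin {q : ℂ} (hq1 : ‖q‖ < 1) (N : ℕ) : ∀ k : ℕ,
    ∑ p ∈ Finset.HasAntidiagonal.antidiagonal N, q ^ (p.1 * (p.1 + k)) *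
      ((qPoch q q p.1)⁻¹ * (qPoch q q (p.1 + k))⁻¹ * (qPoch q q p.2)⁻¹)
      = (qPoch q q N)⁻¹ * (qPoch q q (N + k))⁻¹ := by
  induction N with
  | zero => intro k; simp [aux_zero]
  | succ N ih =>
    intro k
    have h := aux_qne hq1 N
    apply mul_left_cancel₀ h
    have e1 : (1 - q ^ (N + 1)) * ((qPoch q q (N + 1))⁻¹ * (qPoch q q (N + 1 + k))⁻¹)
        = (qPoch q q N)⁻¹ * (qPoch q q (N + k))⁻¹
          + q ^ (N + k + 1) * ((qPoch q q N)⁻¹ * (qPoch q q (N + (k + 1)))⁻¹) := by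
      rw [← mul_assoc, ← aux_inv hq1, aux_inv hq1 (N + k)]
      rw [show N + 1 + k = N + k + 1 by ring, show N + (k + 1) = N + k + 1 by ring]
      ring
    rw [e1, ← ih k, ← ih (k + 1), Finset.mul_sum]
    have e2 : ∀ p ∈ Finset.HasAntidiagonal.antidiagonal (N + 1), (1 - q ^ (N + 1)) * (q ^ (p.1 * (p.1 + k)) *
      ((qPoch q q p.1)⁻¹ * (qPoch q q (p.1 + k))⁻¹ * (qPoch q q p.2)⁻¹)) =
       (1 - q ^ p.2) * (q ^ (p.1 * (p.1 + k)) *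
      ((qPoch q q p.1)⁻¹ * (qPoch q q (p.1 + k))⁻¹ * (qPoch q q p.2)⁻¹)) +
       q ^ p.2 * (1 - q ^ p.1) * (q ^ (p.1 * (p.1 + k)) *
      ((qPoch q q p.1)⁻¹ * (qPoch q q (p.1 + k))⁻¹ * (qPoch q q p.2)⁻¹)) := by
      intro p hp
      rw [Finset.HasAntidiagonal.mem_antidiagonal] at hp
      rw [← hp, pow_add]
      ring
    rw [Finset.sum_congr rfl e2, Finset.sum_add_distrib]
    congr 1
    · rw [Finset.Nat.sum_antidiagonal_succ']
      simp only [pow_zero, sub_self, zero_mul, zero_add, add_zero]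
      apply Finset.sum_congr rfl
      intro p _
      rw [aux_inv hq1 p.2]
      ring
    · rw [Finset.Nat.sum_antidiagonal_succ]
      simp only [pow_zero, sub_self, zero_mul, mul_zero, zero_add, add_zero]
      rw [Finset.mul_sum]
      apply Finset.sum_congr rfl
      intro p hp
      rw [Finset.HasAntidiagonal.mem_antidiagonal] at hp
      rw [aux_inv hq1 p.1, ← hp, show p.1 + 1 + k = p.1 + (k + 1) by ring]
      ring

lemma aux_fin_le {q : ℂ} (hq1 : ‖q‖ < 1) (N M : ℕ) (h : N ≤ M) :
    ∑ s ∈ Finset.range (N + 1), q ^ ((N - s) * (M - s)) *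
      ((qPoch q q (N - s))⁻¹ * (qPoch q q (M - s))⁻¹ * (qPoch q q s)⁻¹)
      = (qPoch q q N)⁻¹ * (qPoch q q M)⁻¹ := by
  obtain ⟨k, rfl⟩ := Nat.exists_eq_add_of_le h
  rw [← aux_fin hq1 N k, ← Finset.Nat.sum_antidiagonal_swap,
    Finset.Nat.sum_antidiagonal_eq_sum_range_succ_mk]
  apply Finset.sum_congr rfl
  intro s hs
  have hs' : s ≤ N := by simpa [Nat.lt_succ_iff] using hs
  simp only [Prod.swap]
  rw [show N + k - s = N - s + k by omega]

lemma aux_fin_min {q : ℂ} (hq1 : ‖q‖ < 1) (N M : ℕ) :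
    ∑ s ∈ Finset.range (min N M + 1), q ^ ((N - s) * (M - s)) *
      ((qPoch q q (N - s))⁻¹ * (qPoch q q (M - s))⁻¹ * (qPoch q q s)⁻¹)
      = (qPoch q q N)⁻¹ * (qPoch q q M)⁻¹ := by
  rcases le_total N M with h | h
  · rw [min_eq_left h, aux_fin_le hq1 N M h]
  · rw [min_eq_right h, mul_comm, ← aux_fin_le hq1 M N h]
    apply Finset.sum_congr rfl
    intro s _
    rw [mul_comm (N - s)]
    ring

/-- Euler series term -/
noncomputable def eul (q x : ℂ) (s : ℕ) : ℂ := (-x) ^ s * q ^ (s.choose 2) * (qPoch q q s)⁻¹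

lemma choose_two_succ (s : ℕ) : (s + 1).choose 2 = s + s.choose 2 := by
  rw [Nat.choose_succ_succ' s 1]; simp

lemma eul_succ {q : ℂ} (hq1 : ‖q‖ < 1) (x : ℂ) (s : ℕ) :
    (1 - q ^ (s + 1)) * eul q x (s + 1) = -x * eul q (x * q) s := by
  unfold eul
  rw [aux_inv hq1 s, choose_two_succ, pow_add q s]
  rw [show -(x * q) = -x * q by ring, mul_pow (-x) q s]
  ring

lemma eul_mul_pow (q x : ℂ) (n s : ℕ) : eul q (x * q ^ n) s = (q ^ n) ^ s * eul q x s := by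
  unfold eul
  rw [show -(x * q ^ n) = q ^ n * -x by ring, mul_pow]
  ring

lemma eul_summable {q : ℂ} (hq1 : ‖q‖ < 1) (x : ℂ) : Summable (fun s => ‖eul q x s‖) := by
  have hlim : Filter.Tendsto (fun s : ℕ => ‖-x * q ^ s / (1 - q ^ (s + 1))‖) Filter.atTop
      (nhds 0) := by
    have t := tendsto_pow_atTop_nhds_zero_of_norm_lt_one hq1
    have t' := t.comp (Filter.tendsto_add_atTop_nat 1)
    have := (((t.const_mul (-x)).div (t'.const_sub 1) (by simp)).norm)
    simpa using this
  have h2 : ∀ᶠ s : ℕ in Filter.atTop, ‖-x * q ^ s / (1 - q ^ (s + 1))‖ ≤ 1/2 :=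
    (hlim.eventually_lt_const (by norm_num : (0:ℝ) < 1/2)).mono fun _ h => h.le
  apply summable_of_ratio_norm_eventually_le (r := 1/2) (by norm_num)
  filter_upwards [h2] with s hs
  have e : eul q x (s + 1) = -x * q ^ s / (1 - q ^ (s + 1)) * eul q x s := by
    have h := aux_qne hq1 s
    apply mul_left_cancel₀ h
    rw [eul_succ hq1]
    have := eul_mul_pow q x 1 s
    rw [pow_one] at this
    rw [this]
    field_simp
  rw [e, norm_norm, norm_norm, norm_mul]
  exact mul_le_mul_of_nonneg_right hs (norm_nonneg _)

lemma eul_fun {q : ℂ} (hq1 : ‖q‖ < 1) (x : ℂ) :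
    ∑' s, eul q x s = (1 - x) * ∑' s, eul q (x * q) s := by
  have s1 := (eul_summable hq1 x).of_norm
  have s2 := (eul_summable hq1 (x * q)).of_norm
  have : ∑' s, eul q x s - ∑' s, eul q (x * q) s = -x * ∑' s, eul q (x * q) s := by
    rw [← s1.tsum_sub s2, (s1.sub s2).tsum_eq_zero_add, ← tsum_mul_left]
    have z : eul q x 0 - eul q (x * q) 0 = 0 := by simp [eul]
    rw [z, zero_add]
    congr 1
    ext s
    rw [← eul_succ hq1]
    have := eul_mul_pow q x 1 (s + 1)
    rw [pow_one] at this
    rw [this]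
    ring
  linear_combination this

lemma eul_iter {q : ℂ} (hq1 : ‖q‖ < 1) (n : ℕ) : ∀ x : ℂ,
    ∑' s, eul q x s = qPoch x q n * ∑' s, eul q (x * q ^ n) s := by
  induction n with
  | zero => intro x; simp [aux_zero]
  | succ n ih =>
    intro x
    rw [aux_succ', eul_fun hq1, ih (x * q), pow_succ', mul_assoc, mul_assoc]

lemma qPoch_tendsto {q : ℂ} (hq1 : ‖q‖ < 1) (x : ℂ) :
    Filter.Tendsto (fun n => qPoch x q n) Filter.atTop (nhds (qPochInf x q)) := by
  have hs : Summable (fun k : ℕ => ‖-(x * q ^ k)‖) := by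
    simp only [norm_neg, norm_mul, norm_pow]
    exact (summable_geometric_of_lt_one (norm_nonneg q) hq1).mul_left _
  have := (multipliable_one_add_of_summable hs).hasProd.tendsto_prod_nat
  simpa [qPoch, qPochInf, sub_eq_add_neg] using this

lemma euler {q : ℂ} (hq1 : ‖q‖ < 1) (x : ℂ) : qPochInf x q = ∑' s, eul q x s := by
  have h1 : Filter.Tendsto (fun n : ℕ => ∑' s, eul q (x * q ^ n) s) Filter.atTop
      (nhds (∑' s, if s = 0 then (1:ℂ) else 0)) := by
    apply tendsto_tsum_of_dominated_convergence (eul_summable hq1 x)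
    · intro s
      rcases Nat.eq_zero_or_pos s with rfl | hs
      · simp [eul, aux_zero]
      · simp only [eul_mul_pow, hs.ne', if_false]
        have t := ((tendsto_pow_atTop_nhds_zero_of_norm_lt_one hq1).pow s).mul_const (eul q x s)
        simpa [hs.ne'] using t
    · refine Filter.Eventually.of_forall fun n s => ?_
      rw [eul_mul_pow, norm_mul]
      apply mul_le_of_le_one_left (norm_nonneg _)
      rw [norm_pow, norm_pow]
      exact pow_le_one₀ (by positivity) (pow_le_one₀ (norm_nonneg _) hq1.le)
  rw [tsum_ite_eq] at h1
  have h2 := (qPoch_tendsto hq1 x).mul h1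
  rw [mul_one] at h2
  refine tendsto_nhds_unique h2 ?_
  simp only [← eul_iter hq1]
  exact tendsto_const_nhds

lemma abstract_main {q : ℂ} (hq1 : ‖q‖ < 1) (x : ℂ) (hx : ∀ n, qPoch x q n ≠ 0)
    (R : ℕ → ℕ → ℂ) (hR : ∀ n m, R (n + 1) (m + 1) = R n m * (-x * q ^ n))
    (h1 : Summable (fun p : ℕ × ℕ => ‖R p.1 p.2 * ((qPoch q q p.1)⁻¹ * (qPoch q q p.2)⁻¹)‖))
    (h2 : Summable (fun p : ℕ × ℕ => ‖R p.1 p.2 * q ^ (p.1 * p.2) *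
      ((qPoch q q p.1)⁻¹ * (qPoch q q p.2)⁻¹ * (qPoch x q p.1)⁻¹)‖)) :
    ∑' n, ∑' m, R n m * ((qPoch q q n)⁻¹ * (qPoch q q m)⁻¹) =
    qPochInf x q * ∑' n, ∑' m, R n m * q ^ (n * m) *
      ((qPoch q q n)⁻¹ * (qPoch q q m)⁻¹ * (qPoch x q n)⁻¹) := by
  have hRs : ∀ s n m, R (n + s) (m + s) = R n m * ((-x) ^ s * (q ^ n) ^ s * q ^ (s.choose 2)) := by
    intro s
    induction s with
    | zero => intro n m; simp
    | succ s ih =>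
      intro n m
      rw [← add_assoc, ← add_assoc, hR, ih, choose_two_succ]
      ring
  set G : ℕ × ℕ → ℂ := fun p => R p.1 p.2 * q ^ (p.1 * p.2) *
      ((qPoch q q p.1)⁻¹ * (qPoch q q p.2)⁻¹ * (qPoch x q p.1)⁻¹) with hG
  let T : (ℕ × ℕ) × ℕ → ℂ := fun t => R (t.1.1 + t.2) (t.1.2 + t.2) * q ^ (t.1.1 * t.1.2) *
      ((qPoch q q t.1.1)⁻¹ * (qPoch q q t.1.2)⁻¹ * (qPoch q q t.2)⁻¹)
  have hTG : ∀ p s, T (p, s) = G p * (qPoch x q p.1 * eul q (x * q ^ p.1) s) := by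
    intro p s
    have := hx p.1
    simp only [T, hG, hRs, eul_mul_pow]
    unfold eul
    field_simp
  obtain ⟨C, hC⟩ := (qPoch_tendsto hq1 x).norm.bddAbove_range
  have hC' : ∀ n, ‖qPoch x q n‖ ≤ C := fun n => hC ⟨n, rfl⟩
  have hTs : Summable T := by
    apply Summable.of_norm_bounded (g := fun t : (ℕ × ℕ) × ℕ => C * (‖G t.1‖ * ‖eul q x t.2‖))
    · exact (h2.mul_of_nonneg (eul_summable hq1 x) (fun _ => norm_nonneg _)
        (fun _ => norm_nonneg _)).mul_left C
    · rintro ⟨p, s⟩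
      rw [hTG, norm_mul (G p), norm_mul (qPoch x q p.1)]
      have e : ‖eul q (x * q ^ p.1) s‖ ≤ ‖eul q x s‖ := by
        rw [eul_mul_pow, norm_mul]
        apply mul_le_of_le_one_left (norm_nonneg _)
        rw [norm_pow, norm_pow]
        exact pow_le_one₀ (by positivity) (pow_le_one₀ (norm_nonneg _) hq1.le)
      calc _ ≤ ‖G p‖ * (C * ‖eul q x s‖) := by
            gcongr
            · exact (norm_nonneg _).trans (hC' 0)
            · exact hC' _
        _ = _ := by ring
  have hR1 : ∑' t, T t = qPochInf x q * ∑' p, G p := by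
    rw [hTs.tsum_prod, ← tsum_mul_left]
    congr 1
    ext p
    simp only [hTG]
    rw [tsum_mul_left, tsum_mul_left, ← eul_iter hq1, ← euler hq1]
    ring
  let T' : (ℕ × ℕ) × ℕ → ℂ := fun t =>
    if t.2 ≤ t.1.1 ∧ t.2 ≤ t.1.2 then T ((t.1.1 - t.2, t.1.2 - t.2), t.2) else 0
  let j : (ℕ × ℕ) × ℕ → (ℕ × ℕ) × ℕ := fun t => ((t.1.1 + t.2, t.1.2 + t.2), t.2)
  have hj : Function.Injective j := by
    rintro ⟨⟨a, b⟩, c⟩ ⟨⟨a', b'⟩, c'⟩ h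
    simp only [j, Prod.mk.injEq] at h ⊢
    omega
  have hTj : T' ∘ j = T := by
    ext ⟨⟨a, b⟩, c⟩
    simp [T', j]
  have hoff : ∀ t, t ∉ Set.range j → T' t = 0 := by
    rintro ⟨⟨a, b⟩, c⟩ ht
    simp only [T']
    rw [if_neg]
    rintro ⟨h, h'⟩
    replace h : c ≤ a := h
    replace h' : c ≤ b := h'
    exact ht ⟨((a - c, b - c), c), by simp [j, Nat.sub_add_cancel h, Nat.sub_add_cancel h']⟩
  have hT's : Summable T' := by
    rw [← hj.summable_iff hoff, hTj]; exact hTs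
  have hT't : ∑' t, T' t = ∑' t, T t := by
    rw [← hTj]
    exact (hj.tsum_eq (fun t ht => by
      by_contra h
      exact ht (hoff t h))).symm
  have hL : ∑' t, T' t = ∑' p : ℕ × ℕ, R p.1 p.2 * ((qPoch q q p.1)⁻¹ * (qPoch q q p.2)⁻¹) := by
    rw [hT's.tsum_prod]
    congr 1
    ext ⟨N, M⟩
    rw [tsum_eq_sum (s := Finset.range (min N M + 1))]
    · rw [← aux_fin_min hq1 N M, Finset.mul_sum]
      apply Finset.sum_congr rfl
      intro s hs
      have hs' : s ≤ N ∧ s ≤ M := by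
        have := Finset.mem_range.mp hs
        omega
      simp only [T', T]
      rw [if_pos hs', Nat.sub_add_cancel hs'.1, Nat.sub_add_cancel hs'.2]
      ring
    · intro s hs
      simp only [T']
      rw [if_neg]
      intro h
      replace h : s ≤ N ∧ s ≤ M := h
      apply hs
      rw [Finset.mem_range]
      omega
  have f1 := h1.of_norm.tsum_prod
  have f2 := h2.of_norm.tsum_prod
  simp only at f1 f2
  rw [← f1, ← hL, hT't, hR1, f2]

lemma ratio_shift {q : ℂ} (hq : q ≠ 0) (a : ℂ) (ha : a ≠ 0) (n m : ℕ) :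
    qPoch (a * q ^ (-((n + 1 : ℕ) : ℤ))) q (m + 1) =
      (-a * (q ^ (n + 1))⁻¹) * (1 - q / a * q ^ n) * qPoch (a * q ^ (-(n : ℤ))) q m := by
  rw [aux_succ']
  have e : a * q ^ (-((n + 1 : ℕ) : ℤ)) * q = a * q ^ (-(n : ℤ)) := by
    rw [zpow_neg, zpow_neg, zpow_natCast, zpow_natCast]
    field_simp
    try ring
  rw [e]
  congr 1
  rw [zpow_neg, zpow_natCast]
  field_simp
  ring

theorem stmt19 (q : ℂ) (hq0 : 0 < ‖q‖) (hq1 : ‖q‖ < 1)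
    (r : ℕ) (hr : 0 < r) (a : Fin (r + 1) → ℂ) (b : Fin r → ℂ)
    (ha0 : ∀ i, a i ≠ 0) (hb0 : ∀ i, b i ≠ 0)
    (haq : ∀ i, ∀ m : ℕ, 1 ≤ m → a i ≠ q ^ m)
    (hbq : ∀ i, ∀ m : ℕ, 1 ≤ m → b i ≠ q ^ m)
    (hbz : ∀ i, ∀ m : ℤ, b i ≠ q ^ m)
    (x y : ℂ) (hy : y ≠ 0) (hx : ∀ m : ℕ, x ≠ q ^ (-(m : ℤ)))
    (h1 : Summable (fun nm : ℕ × ℕ =>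
      ‖q ^ (nm.1 ^ 2) * ((∏ i, qPoch (q / b i) q nm.1) / ∏ i, qPoch (q / a i) q nm.1) *
        (x * (∏ i, b i) / (y * ∏ i, a i)) ^ nm.1 *
        ((∏ i, qPoch (a i * q ^ (-(nm.1 : ℤ))) q nm.2) /
          (qPoch q q nm.2 * ∏ i, qPoch (b i * q ^ (-(nm.1 : ℤ))) q nm.2)) *
        y ^ nm.2 / qPoch q q nm.1‖))
    (h2 : Summable (fun nm : ℕ × ℕ =>
      ‖q ^ (nm.1 ^ 2) * ((∏ i, qPoch (q / b i) q nm.1) / ∏ i, qPoch (q / a i) q nm.1) *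
        (x * (∏ i, b i) / (y * ∏ i, a i)) ^ nm.1 *
        ((∏ i, qPoch (a i * q ^ (-(nm.1 : ℤ))) q nm.2) /
          (qPoch q q nm.2 * ∏ i, qPoch (b i * q ^ (-(nm.1 : ℤ))) q nm.2)) *
        (y * q ^ nm.1) ^ nm.2 / (qPoch q q nm.1 * qPoch x q nm.1)‖)) :
    ∑' n : ℕ, (q ^ (n ^ 2) / qPoch q q n) *
      ((∏ i, qPoch (q / b i) q n) / ∏ i, qPoch (q / a i) q n) *
      (x * (∏ i, b i) / (y * ∏ i, a i)) ^ n *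
      ∑' m : ℕ, (∏ i, qPoch (a i * q ^ (-(n : ℤ))) q m) /
        (qPoch q q m * ∏ i, qPoch (b i * q ^ (-(n : ℤ))) q m) * y ^ m
    = qPochInf x q * ∑' n : ℕ, (q ^ (n ^ 2) / (qPoch q q n * qPoch x q n)) *
      ((∏ i, qPoch (q / b i) q n) / ∏ i, qPoch (q / a i) q n) *
      (x * (∏ i, b i) / (y * ∏ i, a i)) ^ n *
      ∑' m : ℕ, (∏ i, qPoch (a i * q ^ (-(n : ℤ))) q m) /
        (qPoch q q m * ∏ i, qPoch (b i * q ^ (-(n : ℤ))) q m) * (y * q ^ n) ^ m := by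
  have hq : q ≠ 0 := norm_pos_iff.mp hq0
  have hxn : ∀ n, qPoch x q n ≠ 0 := by
    intro n
    rw [qPoch, Finset.prod_ne_zero_iff]
    intro k _ h
    apply hx k
    rw [zpow_neg, zpow_natCast]
    exact eq_inv_of_mul_eq_one_left (sub_eq_zero.mp h).symm
  have hfac : ∀ c : ℂ, c ≠ 0 → (∀ m : ℕ, 1 ≤ m → c ≠ q ^ m) → ∀ n : ℕ, 1 - q / c * q ^ n ≠ 0 := by
    intro c hc h n h0
    apply h (n + 1) (by omega)
    rw [sub_eq_zero] at h0
    field_simp at h0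
    rw [h0]
    ring
  have hbm : ∀ (i : Fin r) (n m : ℕ), qPoch (b i * q ^ (-(n : ℤ))) q m ≠ 0 := by
    intro i n m
    rw [qPoch, Finset.prod_ne_zero_iff]
    intro k _ h
    apply hbz i ((n : ℤ) - k)
    rw [zpow_sub₀ hq, zpow_natCast, zpow_natCast]
    rw [zpow_neg, zpow_natCast, sub_eq_zero] at h
    field_simp at h ⊢
    exact h.symm
  have hA0 : (∏ i, a i) ≠ 0 := Finset.prod_ne_zero_iff.mpr fun i _ => ha0 i
  have hB0 : (∏ i, b i) ≠ 0 := Finset.prod_ne_zero_iff.mpr fun i _ => hb0 i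
  let R : ℕ → ℕ → ℂ := fun n m =>
    q ^ (n ^ 2) * ((∏ i, qPoch (q / b i) q n) / ∏ i, qPoch (q / a i) q n) *
        (x * (∏ i, b i) / (y * ∏ i, a i)) ^ n *
        ((∏ i, qPoch (a i * q ^ (-(n : ℤ))) q m) /
          (∏ i, qPoch (b i * q ^ (-(n : ℤ))) q m)) * y ^ m
  have hR : ∀ n m, R (n + 1) (m + 1) = R n m * (-x * q ^ n) := by
    intro n m
    simp only [R, ratio_shift hq _ (ha0 _), ratio_shift hq _ (hb0 _), aux_succ (q / _),
      Finset.prod_mul_distrib, Finset.prod_const, Finset.card_univ, Fintype.card_fin,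
      Finset.prod_neg]
    have f1 : ∏ i, (1 - q / a i * q ^ n) ≠ 0 :=
      Finset.prod_ne_zero_iff.mpr fun i _ => hfac _ (ha0 i) (haq i) n
    have f2 : ∏ i, (1 - q / b i * q ^ n) ≠ 0 :=
      Finset.prod_ne_zero_iff.mpr fun i _ => hfac _ (hb0 i) (hbq i) n
    have f3 : ∏ i, qPoch (q / a i) q n ≠ 0 :=
      Finset.prod_ne_zero_iff.mpr fun i _ => by
        rw [qPoch, Finset.prod_ne_zero_iff]
        intro k _
        exact hfac _ (ha0 i) (haq i) k
    have f4 : ∏ i, qPoch (b i * q ^ (-(n : ℤ))) q m ≠ 0 :=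
      Finset.prod_ne_zero_iff.mpr fun i _ => hbm i n m
    generalize (∏ i, (1 - q / a i * q ^ n)) = A1 at *
    generalize (∏ i, (1 - q / b i * q ^ n)) = B1 at *
    generalize (∏ i, qPoch (q / a i) q n) = A2 at *
    generalize (∏ i, qPoch (q / b i) q n) = B2 at *
    generalize (∏ i, qPoch (a i * q ^ (-(n : ℤ))) q m) = A3 at *
    generalize (∏ i, qPoch (b i * q ^ (-(n : ℤ))) q m) = B3 at *
    generalize (∏ i, a i) = A4 at *
    generalize (∏ i, b i) = B4 at *
    have hm : ((-1 : ℂ)) ^ r ≠ 0 := by simp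
    rw [pow_succ (-1 : ℂ) r, pow_succ ((q ^ (n + 1))⁻¹) r, pow_succ (_ / _) n]
    have hQ : ((q ^ (n + 1))⁻¹) ^ r ≠ 0 := pow_ne_zero _ (inv_ne_zero (pow_ne_zero _ hq))
    generalize ((q ^ (n + 1))⁻¹) ^ r = Q at *
    generalize (-1 : ℂ) ^ r = E at *
    generalize hz : x * B4 / (y * A4) = z
    have hz' : z * A4 / B4 * y = x := by rw [← hz]; field_simp
    rw [← hz']
    field_simp
    ring
  have e1 : ∀ n m : ℕ, q ^ (n ^ 2) * ((∏ i, qPoch (q / b i) q n) / ∏ i, qPoch (q / a i) q n) *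
        (x * (∏ i, b i) / (y * ∏ i, a i)) ^ n *
        ((∏ i, qPoch (a i * q ^ (-(n : ℤ))) q m) /
          (qPoch q q m * ∏ i, qPoch (b i * q ^ (-(n : ℤ))) q m)) *
        y ^ m / qPoch q q n = R n m * ((qPoch q q n)⁻¹ * (qPoch q q m)⁻¹) := by
    intro n m
    simp only [R, div_eq_mul_inv, mul_inv]
    ring
  have e2 : ∀ n m : ℕ, q ^ (n ^ 2) * ((∏ i, qPoch (q / b i) q n) / ∏ i, qPoch (q / a i) q n) *
        (x * (∏ i, b i) / (y * ∏ i, a i)) ^ n *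
        ((∏ i, qPoch (a i * q ^ (-(n : ℤ))) q m) /
          (qPoch q q m * ∏ i, qPoch (b i * q ^ (-(n : ℤ))) q m)) *
        (y * q ^ n) ^ m / (qPoch q q n * qPoch x q n) = R n m * q ^ (n * m) *
      ((qPoch q q n)⁻¹ * (qPoch q q m)⁻¹ * (qPoch x q n)⁻¹) := by
    intro n m
    simp only [R, div_eq_mul_inv, mul_inv, mul_pow, pow_mul]
    ring
  simp only [e1] at h1
  simp only [e2] at h2
  have key := abstract_main hq1 x hxn R hR h1 h2
  simp only [← e1, ← e2] at key
  simp only [← tsum_mul_left] at key ⊢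
  convert key using 1
  · refine tsum_congr fun n => tsum_congr fun m => ?_
    simp only [div_eq_mul_inv, mul_inv]
    ring
  · refine tsum_congr fun n => tsum_congr fun m => ?_
    simp only [div_eq_mul_inv, mul_inv]
    ring
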